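/- arXiv:2203.05487 — 7 statements merged into one kernel-verified Lean document; each statement's English description precedes it below -/
import Mathlib

section
/- Every finite constructible graph is cop-win. -/
universe u

/-- `y` dominates `x` in `G`: `y ≠ x` and the closed neighbourhood of `x` is contained
in the closed neighbourhood of `y`. -/
def Dominates {V : Type u} (G : SimpleGraph V) (y x : V) : Prop :=
  y ≠ x ∧ ∀ z : V, (z = x ∨ G.Adj x z) → (z = y ∨ G.Adj y z)

/-- `y` dominates `x` in the subgraph of `G` induced by `S`. -/
def DominatesOn {V : Type u} (G : SimpleGraph V) (S : Set V) (y x : V) : Prop :=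
  y ≠ x ∧ ∀ z ∈ S, (z = x ∨ G.Adj x z) → (z = y ∨ G.Adj y z)

/-- `r` (a well-order on `V`) is a construction order for `G`: every non-root vertex `x`
(i.e. one with a strictly earlier vertex) is dominated, in the subgraph induced by the
vertices up to and including `x`, by some strictly earlier vertex. -/
def ConstructionOrderSpec {V : Type u} (G : SimpleGraph V) (r : V → V → Prop) : Prop :=
  ∀ x : V, (∃ y, r y x) → ∃ y, r y x ∧ DominatesOn G {z | r z x ∨ z = x} y x

/-- A graph is constructible if it has a construction order. -/
def Constructible {V : Type u} (G : SimpleGraph V) : Prop :=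
  ∃ r : V → V → Prop, IsWellOrder V r ∧ ConstructionOrderSpec G r

/-- Given a cop strategy `σ` (a function of the robber's history of positions) and a robber
position sequence `r`, the cop's position at time `n`: the cop has seen the robber's first
`n` positions when making his `n`-th move. `copPos σ r 0 = σ []` is the cop's start. -/
def copPos {V : Type u} (σ : List V → V) (r : ℕ → V) (n : ℕ) : V :=
  σ (List.ofFn fun i : Fin n => r i.val)

/-- A cop strategy is legal if each successive position is equal or adjacent to the previous one. -/
def LegalCop {V : Type u} (G : SimpleGraph V) (σ : List V → V) : Prop :=
  ∀ l : List V, l ≠ [] → σ l = σ l.dropLast ∨ G.Adj (σ l.dropLast) (σ l)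

/-- A legal robber position sequence: each move is to an adjacent vertex or staying put. -/
def LegalRun {V : Type u} (G : SimpleGraph V) (r : ℕ → V) : Prop :=
  ∀ n : ℕ, r (n + 1) = r n ∨ G.Adj (r n) (r (n + 1))

/-- The cop catches the robber: at some time their positions coincide (either just after the
robber's move, or just after the cop's move). -/
def Caught {V : Type u} (σ : List V → V) (r : ℕ → V) : Prop :=
  ∃ n : ℕ, copPos σ r n = r n ∨ copPos σ r (n + 1) = r n

/-- `G` is cop-win: the cop has a legal strategy catching every legal robber play. -/
def CopWin {V : Type u} (G : SimpleGraph V) : Prop :=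
  ∃ σ : List V → V, LegalCop G σ ∧ ∀ r : ℕ → V, LegalRun G r → Caught σ r

/-- `G` is a weak cop win: the cop has a legal strategy guaranteeing that in every legal robber
play, either the robber is caught or the robber occupies each vertex at only finitely many times. -/
def WeakCopWin {V : Type u} (G : SimpleGraph V) : Prop :=
  ∃ σ : List V → V, LegalCop G σ ∧
    ∀ r : ℕ → V, LegalRun G r → Caught σ r ∨ ∀ v : V, {n : ℕ | r n = v}.Finite

/-!
Rank the vertices by their position in the construction order and let `shadow n v` be the first
vertex of rank at most `n` on the chain of successive dominators starting at `v`. Passing to a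
dominator preserves adjacency-or-equality with every vertex of smaller or equal rank. Hence, if the
robber moves from `v` to `w`, then the cop may move from `shadow n v` to `shadow (n + 1) w`: keep
replacing whichever of `v` and `w` has the larger rank by its dominator. The shadow at level `0`
is always the root, and at the level of the largest rank it is the robber himself.
-/

section Strategies

variable {V : Type u} {G : SimpleGraph V}

/-- A single legal move of either player: `y` lies in the closed neighbourhood of `x`. The
disjuncts are those of `DominatesOn`, `LegalCop` and `LegalRun`, which thus unfold to it. -/
def LegalMove (G : SimpleGraph V) (x y : V) : Prop :=
  y = x ∨ G.Adj x y

theorem LegalMove.symm {x y : V} (h : LegalMove G x y) : LegalMove G y x :=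
  h.imp Eq.symm SimpleGraph.Adj.symm

theorem DominatesOn.legalMove {S : Set V} {x y z : V} (h : DominatesOn G S y x) (hz : z ∈ S)
    (hxz : LegalMove G x z) : LegalMove G y z :=
  h.2 z hz hxz

open Classical in
/-- The strategy that moves to wherever `τ` wants the cop to be if this is a legal move, and stays
put otherwise. It makes `τ` legal also on the histories that no legal robber produces. -/
noncomputable def legalize (G : SimpleGraph V) (τ : List V → V) (history : List V) : V :=
  history.reverseRecOn (τ []) fun l v pos =>
    if LegalMove G pos (τ (l ++ [v])) then τ (l ++ [v]) else pos

theorem legalize_nil (τ : List V → V) : legalize G τ [] = τ [] := by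
  rw [legalize, List.reverseRecOn_nil]

open Classical in
theorem legalize_concat (τ : List V → V) (l : List V) (v : V) :
    legalize G τ (l ++ [v]) =
      if LegalMove G (legalize G τ l) (τ (l ++ [v])) then τ (l ++ [v]) else legalize G τ l := by
  rw [legalize, List.reverseRecOn_concat, ← legalize]

theorem legalCop_legalize (G : SimpleGraph V) (τ : List V → V) : LegalCop G (legalize G τ) := by
  intro history hne
  obtain ⟨l, v, rfl⟩ := List.eq_nil_or_concat' history |>.resolve_left hne
  rw [List.dropLast_concat, legalize_concat]
  split_ifs with hmove
  · exact hmove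
  · exact Or.inl rfl

theorem copPos_zero (σ : List V → V) (r : ℕ → V) : copPos σ r 0 = σ [] := by
  rw [copPos, List.ofFn_zero]

theorem copPos_succ (σ : List V → V) (r : ℕ → V) (n : ℕ) :
    copPos σ r (n + 1) = σ ((List.ofFn fun i : Fin n => r i) ++ [r n]) := by
  simp only [copPos, List.ofFn_succ_last, Fin.val_castSucc, Fin.val_last]

theorem copPos_legalize {τ : List V → V} {r : ℕ → V}
    (hτ : ∀ n, LegalMove G (copPos τ r n) (copPos τ r (n + 1))) (n : ℕ) :
    copPos (legalize G τ) r n = copPos τ r n := by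
  induction n with
  | zero => rw [copPos_zero, copPos_zero, legalize_nil]
  | succ n ih =>
    have hmove := hτ n
    rw [← ih, copPos_succ] at hmove
    rw [copPos_succ, copPos_succ, legalize_concat]
    exact if_pos hmove

theorem exists_legalCop_copPos_succ_eq {c : V} {f : ℕ → V → V}
    (hstart : ∀ v, LegalMove G c (f 0 v))
    (hstep : ∀ n v w, LegalMove G v w → LegalMove G (f n v) (f (n + 1) w)) :
    ∃ σ, LegalCop G σ ∧ ∀ r, LegalRun G r → ∀ n, copPos σ r (n + 1) = f n (r n) := by
  let τ : List V → V := fun l => l.getLast?.elim c (f (l.length - 1))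
  have copPos_τ (r : ℕ → V) (n : ℕ) : copPos τ r (n + 1) = f n (r n) := by
    simp [copPos_succ, τ]
  have legalMove_τ (r : ℕ → V) (hr : LegalRun G r) (n : ℕ) :
      LegalMove G (copPos τ r n) (copPos τ r (n + 1)) := by
    cases n with
    | zero =>
      rw [copPos_τ, copPos_zero]
      exact hstart (r 0)
    | succ n =>
      rw [copPos_τ, copPos_τ]
      exact hstep n (r n) (r (n + 1)) (hr n)
  refine ⟨legalize G τ, legalCop_legalize G τ, fun r hr n => ?_⟩
  rw [copPos_legalize (legalMove_τ r hr), copPos_τ]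

end Strategies

/-- A construction order recorded by natural-number ranks: each vertex other than the unique one of
rank `0` is dominated by its parent, of smaller rank, among the vertices of at most its own rank.
Positive ranks may be shared by several vertices, even infinitely many. The parent of the root is
a junk value. -/
structure DominationRanking {V : Type u} (G : SimpleGraph V) where
  rank : V → ℕ
  parent : V → V
  rank_parent_lt {x : V} : rank x ≠ 0 → rank (parent x) < rank x
  dominatesOn_parent {x : V} : rank x ≠ 0 → DominatesOn G {z | rank z ≤ rank x} (parent x) x
  eq_of_rank_eq_zero {x y : V} : rank x = 0 → rank y = 0 → x = y

namespace DominationRanking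

variable {V : Type u} {G : SimpleGraph V} (D : DominationRanking G)

/-- The first vertex of rank at most `n` on the chain of parents starting at `v`. It is the image
of `v` under the retraction of the graph onto the vertices of rank at most `n`. -/
def shadow (n : ℕ) (v : V) : V :=
  if D.rank v ≤ n then v else shadow n (D.parent v)
termination_by D.rank v
decreasing_by exact D.rank_parent_lt (by omega)

variable {D} {n : ℕ} {v w : V}

theorem shadow_of_rank_le (h : D.rank v ≤ n) : D.shadow n v = v := by
  rw [shadow, if_pos h]

theorem shadow_of_lt_rank (h : n < D.rank v) : D.shadow n v = D.shadow n (D.parent v) := by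
  rw [shadow, if_neg h.not_ge]

theorem rank_shadow_le (D : DominationRanking G) (n : ℕ) (v : V) :
    D.rank (D.shadow n v) ≤ n := by
  induction v using shadow.induct D n with
  | case1 v h => rwa [shadow_of_rank_le h]
  | case2 v h ih => rwa [shadow_of_lt_rank (not_le.mp h)]

theorem shadow_zero_eq_shadow_zero (D : DominationRanking G) (v w : V) :
    D.shadow 0 v = D.shadow 0 w :=
  D.eq_of_rank_eq_zero (Nat.le_zero.mp (D.rank_shadow_le 0 v))
    (Nat.le_zero.mp (D.rank_shadow_le 0 w))

theorem legalMove_parent (hv : D.rank v ≠ 0) (hwv : D.rank w ≤ D.rank v) (h : LegalMove G v w) :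
    LegalMove G (D.parent v) w :=
  (D.dominatesOn_parent hv).legalMove hwv h

theorem legalMove_shadow_succ (n : ℕ) (h : LegalMove G v w) :
    LegalMove G (D.shadow n v) (D.shadow (n + 1) w) := by
  induction hk : D.rank v + D.rank w using Nat.strong_induction_on generalizing v w with
  | _ k ih =>
    by_cases fold_v : n < D.rank v ∧ D.rank w ≤ D.rank v
    · have hv : D.rank v ≠ 0 := by omega
      have hlt := D.rank_parent_lt hv
      rw [shadow_of_lt_rank fold_v.1]
      exact ih _ (by omega) (legalMove_parent hv fold_v.2 h) rfl
    by_cases fold_w : n + 1 < D.rank w ∧ D.rank v ≤ D.rank w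
    · have hw : D.rank w ≠ 0 := by omega
      have hlt := D.rank_parent_lt hw
      rw [shadow_of_lt_rank fold_w.1]
      exact ih _ (by omega) (legalMove_parent hw fold_w.2 h.symm).symm rfl
    rwa [shadow_of_rank_le (by omega), shadow_of_rank_le (by omega)]

end DominationRanking

theorem ncard_setOf_rel_lt_ncard_iff {α : Type*} {r : α → α → Prop} [IsStrictTotalOrder α r]
    (hfin : ∀ a, {c | r c a}.Finite) {a b : α} :
    {c | r c a}.ncard < {c | r c b}.ncard ↔ r a b := by
  have ncard_lt {a b : α} (h : r a b) : {c | r c a}.ncard < {c | r c b}.ncard :=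
    Set.ncard_lt_ncard ⟨fun _ hc => _root_.trans hc h, fun hss => irrefl a (hss h)⟩ (hfin b)
  refine ⟨fun h => ?_, ncard_lt⟩
  rcases trichotomous_of r a b with hab | rfl | hba
  · exact hab
  · exact absurd h (lt_irrefl _)
  · exact absurd h (ncard_lt hba).not_gt

theorem ConstructionOrderSpec.nonempty_dominationRanking {V : Type u} {G : SimpleGraph V}
    {r : V → V → Prop} [IsStrictTotalOrder V r] (h : ConstructionOrderSpec G r)
    (hfin : ∀ x, {z | r z x}.Finite) : Nonempty (DominationRanking G) := by
  let rank (x : V) : ℕ := {z | r z x}.ncard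
  have rank_lt_iff {x y : V} : rank x < rank y ↔ r x y := ncard_setOf_rel_lt_ncard_iff hfin
  have rel_or_eq {z x : V} (hzx : rank z ≤ rank x) : r z x ∨ z = x := by
    rcases trichotomous_of r z x with hlt | heq | hgt
    · exact Or.inl hlt
    · exact Or.inr heq
    · exact absurd (rank_lt_iff.mpr hgt) hzx.not_gt
  have exists_parent (x : V) : ∃ y, rank x ≠ 0 →
      rank y < rank x ∧ DominatesOn G {z | rank z ≤ rank x} y x := by
    by_cases hx : rank x = 0
    · exact ⟨x, fun hne => absurd hx hne⟩
    · obtain ⟨y, hyx, hdom⟩ := h x (Set.nonempty_of_ncard_ne_zero hx)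
      exact ⟨y, fun _ => ⟨rank_lt_iff.mpr hyx, hdom.1, fun z hz => hdom.2 z (rel_or_eq hz)⟩⟩
  choose parent hparent using exists_parent
  refine ⟨⟨rank, parent, fun hx => (hparent _ hx).1, fun hx => (hparent _ hx).2, ?_⟩⟩
  intro x y hx hy
  refine (rel_or_eq (hx.trans hy.symm).le).resolve_left fun hxy => ?_
  exact (rank_lt_iff.mpr hxy).ne (hx.trans hy.symm)

theorem copWin_of_finite_constructible_general {V : Type u} [Nonempty V] {G : SimpleGraph V}
    (D : DominationRanking G) (hbdd : BddAbove (Set.range D.rank)) : CopWin G := by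
  obtain ⟨N, hN⟩ := hbdd
  have hstart (v : V) : LegalMove G (D.shadow 0 (Classical.arbitrary V)) (D.shadow 0 v) :=
    Or.inl (D.shadow_zero_eq_shadow_zero v _)
  obtain ⟨σ, hlegal, hσ⟩ := exists_legalCop_copPos_succ_eq hstart
    fun n _ _ hvw => DominationRanking.legalMove_shadow_succ n hvw
  refine ⟨σ, hlegal, fun r hr => ⟨N, Or.inr ?_⟩⟩
  rw [hσ r hr, DominationRanking.shadow_of_rank_le (hN ⟨r N, rfl⟩)]

theorem copWin_of_finite_constructible {V : Type u} [Finite V] [Nonempty V]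
    (G : SimpleGraph V) (h : Constructible G) : CopWin G := by
  obtain ⟨r, hr, hspec⟩ := h
  obtain ⟨D⟩ := hspec.nonempty_dominationRanking fun _ => Set.toFinite _
  exact copWin_of_finite_constructible_general D (Set.finite_range D.rank).bddAbove
end

section
/- For any finite graph G and any positive integer n, the graph G*P_n is constructible. -/
universe u

/-- The graph `G*P_n`: vertex set `V × {0, 1, ..., n}`, with distinct `(x, j)` and `(x', j')`
adjacent iff either (`x` and `x'` are adjacent or equal and `|j - j'| ≤ 1`) or `j = j' = n`. -/
def starPath {V : Type u} (G : SimpleGraph V) (n : ℕ) : SimpleGraph (V × Fin (n + 1)) :=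
  SimpleGraph.fromRel (fun p q =>
    ((p.1 = q.1 ∨ G.Adj p.1 q.1) ∧ p.2.val ≤ q.2.val + 1 ∧ q.2.val ≤ p.2.val + 1) ∨
    (p.2.val = n ∧ q.2.val = n))

/-!
List the vertices by decreasing level. The vertices of level `n` come first and form a clique, so
any earlier vertex dominates a later one. Below level `n`, at the moment `(x, j)` is added nothing
below level `j` is present, so its neighbours lie in levels `j` and `j + 1`, and all of them are
equal or adjacent to `(x, j + 1)`.
-/

theorem DominatesOn.mono {V : Type u} {G : SimpleGraph V} {S T : Set V} {x y : V}
    (h : DominatesOn G T y x) (hST : S ⊆ T) : DominatesOn G S y x :=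
  ⟨h.1, fun z hz ↦ h.2 z (hST hz)⟩

/-- The lexicographic order on `V × {0, ..., n}` listing the levels from `n` down to `0`, with each
level listed according to `r`. It is the construction order used for `starPath G n`. -/
def descendingLevelOrder {V : Type u} (r : V → V → Prop) (n : ℕ) :
    V × Fin (n + 1) → V × Fin (n + 1) → Prop :=
  Equiv.prodComm V (Fin (n + 1)) ⁻¹'o Prod.Lex (· > ·) r

section DescendingLevelOrder

variable {V : Type u} {r : V → V → Prop} {n : ℕ} {p q : V × Fin (n + 1)}

theorem descendingLevelOrder_iff :
    descendingLevelOrder r n p q ↔ q.2 < p.2 ∨ p.2 = q.2 ∧ r p.1 q.1 :=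
  Prod.lex_def

instance isWellOrder_descendingLevelOrder [IsWellOrder V r] :
    IsWellOrder (V × Fin (n + 1)) (descendingLevelOrder r n) :=
  RelIso.IsWellOrder.preimage _ _

theorem level_le_of_descendingLevelOrder (h : descendingLevelOrder r n p q) : q.2 ≤ p.2 :=
  (descendingLevelOrder_iff.mp h).elim le_of_lt fun h ↦ h.1.ge

end DescendingLevelOrder

section StarPath

variable {V : Type u} {G : SimpleGraph V} {n : ℕ}

theorem eq_or_starPath_adj_iff {p q : V × Fin (n + 1)} :
    q = p ∨ (starPath G n).Adj p q ↔
      ((p.1 = q.1 ∨ G.Adj p.1 q.1) ∧ p.2.val ≤ q.2.val + 1 ∧ q.2.val ≤ p.2.val + 1) ∨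
        (p.2 = Fin.last n ∧ q.2 = Fin.last n) := by
  simp only [starPath, SimpleGraph.fromRel_adj, Fin.ext_iff, Fin.val_last]
  grind [G.adj_comm]

theorem starPath_dominatesOn_last_level {p w : V × Fin (n + 1)} (hwp : w ≠ p)
    (hw : w.2 = Fin.last n) :
    DominatesOn (starPath G n) {z | z.2 = Fin.last n} w p :=
  ⟨hwp, fun _ hz _ ↦ eq_or_starPath_adj_iff.mpr (Or.inr ⟨hw, hz⟩)⟩

theorem starPath_dominatesOn_succ_level (x : V) (j : Fin n) :
    DominatesOn (starPath G n) {z | j.castSucc ≤ z.2} (x, j.succ) (x, j.castSucc) := by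
  refine ⟨by simp [Fin.ext_iff], fun z hjz hxz ↦ eq_or_starPath_adj_iff.mpr (Or.inl ?_)⟩
  rw [Set.mem_ofPred_eq, Fin.le_def, Fin.val_castSucc] at hjz
  rcases eq_or_starPath_adj_iff.mp hxz with ⟨hx, -, hzj⟩ | ⟨hj, -⟩
  · simp only [Fin.val_castSucc, Fin.val_succ] at hzj ⊢
    exact ⟨hx, by lia, by lia⟩
  · exact absurd hj j.castSucc_ne_last

theorem constructionOrderSpec_starPath (r : V → V → Prop) [IsWellOrder V r] :
    ConstructionOrderSpec (starPath G n) (descendingLevelOrder r n) := by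
  rintro ⟨x, j⟩ ⟨w, hw⟩
  have present_level_ge : {z | descendingLevelOrder r n z (x, j) ∨ z = (x, j)} ⊆ {z | j ≤ z.2} := by
    rintro z (hz | rfl)
    exacts [level_le_of_descendingLevelOrder hz, le_refl j]
  induction j using Fin.lastCases with
  | last =>
    have w_last : w.2 = Fin.last n := Fin.last_le_iff.mp (level_le_of_descendingLevelOrder hw)
    exact ⟨w, hw, (starPath_dominatesOn_last_level (ne_of_irrefl hw) w_last).mono
      fun z hz ↦ Fin.last_le_iff.mp (present_level_ge hz)⟩
  | cast j =>
    exact ⟨(x, j.succ), descendingLevelOrder_iff.mpr (Or.inl j.castSucc_lt_succ),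
      (starPath_dominatesOn_succ_level x j).mono present_level_ge⟩

end StarPath

theorem starPath_constructible_general {V : Type u} (G : SimpleGraph V) (n : ℕ) :
    Constructible (starPath G n) :=
  ⟨descendingLevelOrder WellOrderingRel n, inferInstance,
    constructionOrderSpec_starPath WellOrderingRel⟩

theorem starPath_constructible {V : Type u} [Fintype V] (G : SimpleGraph V) (n : ℕ)
    (hn : 0 < n) : Constructible (starPath G n) :=
  starPath_constructible_general G n
end

section
/- Let G be a finite graph that is not constructible and let n be a positive integer. Then in the game of cops and robbers on G*P_n, the robber has a strategy guaranteeing that in any play in which the cop never occupies a vertex of the form (x, n), the robber is never caught. In particular, the cop can be forced to visit a vertex of the form (x, n) before catching the robber. -/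
universe u

/-- Given a robber strategy `τ` (a function of the cop's history of positions) and a cop
position sequence `c`, the robber's position at time `m`: the robber has seen the cop's
first `m + 1` positions when making his `m`-th move. -/
def robPos {W : Type u} (τ : List W → W) (c : ℕ → W) (m : ℕ) : W :=
  τ (List.ofFn fun i : Fin (m + 1) => c i.val)

/-!
A vertex `x` dominated by `y` can be folded onto `y`, so `G - x` is a retract of `G` (as graphs with
a loop at every vertex), and `G` is constructible if `G - x` is. A robber who evades the cop on a
retract also evades him on the whole graph, by playing on the retract against the cop's image. Hence
by induction the robber evades on `G` unless `G` is constructible, the base of the induction being a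
graph with at least two vertices and none dominated: there a robber at distance at least two from
the cop can restore that distance after each move of the cop.

Away from the top layer, `G` is a retract of `G*P_n` via the projection `(x, j) ↦ x` and the
inclusion `x ↦ (x, 0)`, so the same transfer gives a strategy on `G*P_n` that is safe until the cop
visits the top layer.
-/

/-- `y` lies in the closed neighbourhood of `x`, that is, moving from `x` to `y` is legal in the
game. The order of the disjuncts is that of `Dominates` and of the rules of the game. -/
def ClosedAdj {V : Type*} (G : SimpleGraph V) (x y : V) : Prop :=
  y = x ∨ G.Adj x y

namespace ClosedAdj

variable {V : Type*} {G : SimpleGraph V} {x y : V}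

theorem refl (G : SimpleGraph V) (x : V) : ClosedAdj G x x :=
  Or.inl rfl

theorem symm (h : ClosedAdj G x y) : ClosedAdj G y x :=
  h.imp Eq.symm SimpleGraph.Adj.symm

theorem of_induce {p : V → Prop} {a b : {v // p v}} (h : ClosedAdj (G.induce {v | p v}) a b) :
    ClosedAdj G a b :=
  h.imp (congrArg Subtype.val) id

theorem induce {p : V → Prop} {a b : {v // p v}} (h : ClosedAdj G a b) :
    ClosedAdj (G.induce {v | p v}) a b :=
  h.imp Subtype.ext id

end ClosedAdj

/-- `R c r` describes positions in which the robber at `r` is safe from a cop at `c` who is to move: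
the cop cannot catch him at once, and the robber can answer every cop move by restoring `R`. Safety
is only required while the cop is in the region `S`; `S = Set.univ` is the unrestricted game. -/
structure IsEvasion {V : Type*} (G : SimpleGraph V) (S : Set V) (R : V → V → Prop) : Prop where
  exists_start (c : V) : ∃ r, R c r
  ne_of_move {c r c' : V} : c ∈ S → R c r → ClosedAdj G c c' → c' ≠ r
  exists_response {c r c' : V} :
    c ∈ S → R c r → ClosedAdj G c c' → ∃ r', ClosedAdj G r r' ∧ R c' r'

theorem IsEvasion.of_retract {V W : Type*} {G : SimpleGraph V} {H : SimpleGraph W}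
    {S : Set V} {T : Set W} {R : W → W → Prop} (hR : IsEvasion H T R) {ι : W → V} {ρ : V → W}
    (hρι : Function.LeftInverse ρ ι) (hι : ∀ {a b}, ClosedAdj H a b → ClosedAdj G (ι a) (ι b))
    (hρ : ∀ {a b}, a ∈ S → ClosedAdj G a b → ClosedAdj H (ρ a) (ρ b)) (hST : Set.MapsTo ρ S T) :
    IsEvasion G S fun c r => ∃ w, ι w = r ∧ R (ρ c) w where
  exists_start c := by
    obtain ⟨w, hw⟩ := hR.exists_start (ρ c)
    exact ⟨ι w, w, rfl, hw⟩
  ne_of_move := by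
    rintro c _ _ hc ⟨w, rfl, hw⟩ hmove rfl
    exact hR.ne_of_move (hST hc) hw (hρ hc hmove) (hρι w)
  exists_response := by
    rintro c _ c' hc ⟨w, rfl, hw⟩ hmove
    obtain ⟨w', hww', hw'⟩ := hR.exists_response (hST hc) hw (hρ hc hmove)
    exact ⟨ι w', hι hww', w', rfl, hw'⟩

section Dismantling

variable {V : Type*} {G : SimpleGraph V}

theorem exists_closedAdj_not_closedAdj_of_not_dominates {c r : V} (hne : c ≠ r)
    (h : ¬ Dominates G c r) : ∃ z, ClosedAdj G r z ∧ ¬ ClosedAdj G c z := by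
  by_contra! hsub
  exact h ⟨hne, hsub⟩

theorem isEvasion_not_closedAdj_of_forall_not_dominates [Nontrivial V]
    (h : ∀ y x, ¬ Dominates G y x) : IsEvasion G Set.univ fun c r => ¬ ClosedAdj G c r where
  exists_start c := by
    obtain ⟨r, hr⟩ := exists_ne c
    obtain ⟨z, -, hz⟩ := exists_closedAdj_not_closedAdj_of_not_dominates hr.symm (h c r)
    exact ⟨z, hz⟩
  ne_of_move := by
    rintro c r _ - hcr hmove rfl
    exact hcr hmove
  exists_response := by
    rintro c r c' - hcr hmove
    have hne : c' ≠ r := by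
      rintro rfl
      exact hcr hmove
    exact exists_closedAdj_not_closedAdj_of_not_dominates hne (h c' r)

open Classical in
/-- The retraction of a graph onto the graph with the vertex `x` deleted that moves `x` to `y`. -/
noncomputable def foldVertex (x : V) (y : {v // v ≠ x}) (a : V) : {v // v ≠ x} :=
  if h : a = x then y else ⟨a, h⟩

theorem foldVertex_self (x : V) (y : {v // v ≠ x}) : foldVertex x y x = y :=
  dif_pos rfl

theorem foldVertex_coe {x : V} (y a : {v // v ≠ x}) : foldVertex x y a = a :=
  dif_neg a.2

theorem Dominates.closedAdj_foldVertex {x : V} {y : {v // v ≠ x}} (hyx : Dominates G y x) {a b : V}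
    (hab : ClosedAdj G a b) :
    ClosedAdj (G.induce {v | v ≠ x}) (foldVertex x y a) (foldVertex x y b) := by
  have move_from_x (b : {v // v ≠ x}) (hb : ClosedAdj G x b) :
      ClosedAdj (G.induce {v | v ≠ x}) y b :=
    .induce (hyx.2 b hb)
  by_cases ha : a = x <;> by_cases hb : b = x
  · subst ha hb
    exact .refl _ _
  · subst ha
    lift b to {v // v ≠ a} using hb
    simpa only [foldVertex_self, foldVertex_coe] using move_from_x b hab
  · subst hb
    lift a to {v // v ≠ b} using ha
    simpa only [foldVertex_self, foldVertex_coe] using (move_from_x a hab.symm).symm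
  · lift a to {v // v ≠ x} using ha
    lift b to {v // v ≠ x} using hb
    simpa only [foldVertex_coe] using hab.induce

theorem Dominates.exists_isEvasion_of_induce {x y : V} (hyx : Dominates G y x)
    (h : ∃ R, IsEvasion (G.induce {v | v ≠ x}) Set.univ R) : ∃ R, IsEvasion G Set.univ R := by
  obtain ⟨R, hR⟩ := h
  lift y to {v // v ≠ x} using hyx.1
  exact ⟨_, hR.of_retract (ι := Subtype.val) (foldVertex_coe y) .of_induce
    (fun _ => hyx.closedAdj_foldVertex) (Set.mapsTo_univ _ _)⟩

/-- The relation on `V` that extends the relation `r` on the vertices other than `x` by putting `x`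
after all of them. -/
inductive AppendLast (x : V) (r : {v // v ≠ x} → {v // v ≠ x} → Prop) : V → V → Prop
  | coe {a b : {v // v ≠ x}} (h : r a b) : AppendLast x r a b
  | last (a : {v // v ≠ x}) : AppendLast x r a x

namespace AppendLast

variable {x : V} {r : {v // v ≠ x} → {v // v ≠ x} → Prop}

theorem left_ne {a b : V} (h : AppendLast x r a b) : a ≠ x := by
  cases h with
  | @coe a => exact a.2
  | last a => exact a.2

theorem coe_iff {a b : {v // v ≠ x}} : AppendLast x r a b ↔ r a b := by
  refine ⟨fun h => ?_, .coe⟩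
  generalize ha : (a : V) = a', hb : (b : V) = b' at h
  cases h with
  | coe h => rwa [Subtype.ext ha, Subtype.ext hb]
  | last => exact (b.2 hb).elim

theorem wellFounded (hr : WellFounded r) : WellFounded (AppendLast x r) := by
  have acc_coe (a : {v // v ≠ x}) : Acc (AppendLast x r) a := by
    induction a using hr.induction with
    | _ a ih =>
      refine ⟨_, fun b hba => ?_⟩
      lift b to {v // v ≠ x} using hba.left_ne
      exact ih b (coe_iff.mp hba)
  exact ⟨fun a => ⟨a, fun b hba => acc_coe ⟨b, hba.left_ne⟩⟩⟩

theorem isWellOrder (hr : IsWellOrder _ r) : IsWellOrder V (AppendLast x r) where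
  wf := wellFounded hr.wf
  trichotomous a b hab hba := by
    by_cases ha : a = x <;> by_cases hb : b = x
    · rw [ha, hb]
    · subst ha
      exact (hba (.last ⟨b, hb⟩)).elim
    · subst hb
      exact (hab (.last ⟨a, ha⟩)).elim
    · lift a to {v // v ≠ x} using ha
      lift b to {v // v ≠ x} using hb
      rw [coe_iff] at hab hba
      exact congrArg Subtype.val (hr.trichotomous a b hab hba)

end AppendLast

theorem Dominates.constructionOrderSpec_appendLast {x y : V} (hyx : Dominates G y x)
    {r : {v // v ≠ x} → {v // v ≠ x} → Prop}
    (hr : ConstructionOrderSpec (G.induce {v | v ≠ x}) r) :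
    ConstructionOrderSpec G (AppendLast x r) := by
  rintro a ⟨b, hba⟩
  by_cases ha : a = x
  · subst ha
    exact ⟨y, .last ⟨y, hyx.1⟩, hyx.1, fun z _ => hyx.2 z⟩
  · lift a to {v // v ≠ x} using ha
    lift b to {v // v ≠ x} using hba.left_ne
    obtain ⟨w, hwa, hne, hdom⟩ := hr a ⟨b, AppendLast.coe_iff.mp hba⟩
    refine ⟨w, .coe hwa, Subtype.coe_ne_coe.mpr hne, fun z hz hza => ?_⟩
    have hzx : z ≠ x := by
      rcases hz with hz | rfl
      · exact hz.left_ne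
      · exact a.2
    lift z to {v // v ≠ x} using hzx
    have hz' : r z a ∨ z = a := hz.imp AppendLast.coe_iff.mp Subtype.ext
    exact ClosedAdj.of_induce (hdom z hz' (ClosedAdj.induce hza))

theorem Dominates.constructible_of_induce {x y : V} (hyx : Dominates G y x)
    (h : Constructible (G.induce {v | v ≠ x})) : Constructible G := by
  obtain ⟨r, hwo, hr⟩ := h
  exact ⟨AppendLast x r, AppendLast.isWellOrder hwo, hyx.constructionOrderSpec_appendLast hr⟩

theorem constructible_of_subsingleton [Subsingleton V] (G : SimpleGraph V) : Constructible G :=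
  ⟨emptyRelation, inferInstance, fun _ ⟨_, h⟩ => h.elim⟩

theorem constructible_or_exists_isEvasion [Finite V] (G : SimpleGraph V) :
    Constructible G ∨ ∃ R, IsEvasion G Set.univ R := by
  induction hk : Nat.card V using Nat.strong_induction_on generalizing V with
  | _ k ih =>
    rcases subsingleton_or_nontrivial V with _ | _
    · exact .inl (constructible_of_subsingleton G)
    by_cases hstiff : ∀ y x, ¬ Dominates G y x
    · exact .inr ⟨_, isEvasion_not_closedAdj_of_forall_not_dominates hstiff⟩
    push Not at hstiff
    obtain ⟨y, x, hyx⟩ := hstiff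
    have hcard : Nat.card {v // v ≠ x} < k := hk ▸ Finite.card_subtype_lt (x := x) (by simp)
    exact (ih _ hcard (G.induce {v | v ≠ x}) rfl).imp hyx.constructible_of_induce
      hyx.exists_isEvasion_of_induce

end Dismantling

section Strategy

variable {V : Type*}

/-- The robber strategy that starts at `start c₀` and then always moves from `r` to `next r c`,
where `c` is the cop's latest position. The empty history never occurs in a play; its value is
junk. -/
noncomputable def positionalStrategy [Nonempty V] (start : V → V) (next : V → V → V) : List V → V
  | [] => Classical.arbitrary V
  | c₀ :: cs => cs.foldl next (start c₀)

theorem robPos_positionalStrategy_zero [Nonempty V] (start : V → V) (next : V → V → V)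
    (c : ℕ → V) : robPos (positionalStrategy start next) c 0 = start (c 0) := by
  simp [robPos, positionalStrategy]

theorem robPos_positionalStrategy_succ [Nonempty V] (start : V → V) (next : V → V → V)
    (c : ℕ → V) (m : ℕ) :
    robPos (positionalStrategy start next) c (m + 1) =
      next (robPos (positionalStrategy start next) c m) (c (m + 1)) := by
  unfold robPos
  rw [List.ofFn_succ_last, List.ofFn_succ]
  simp [positionalStrategy]

theorem exists_legal_response (G : SimpleGraph V) (R : V → V → Prop) (r c : V) :
    ∃ r', ClosedAdj G r r' ∧ ((∃ r'', ClosedAdj G r r'' ∧ R c r'') → R c r') := by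
  by_cases h : ∃ r'', ClosedAdj G r r'' ∧ R c r''
  · obtain ⟨r'', hmove, hR⟩ := h
    exact ⟨r'', hmove, fun _ => hR⟩
  · exact ⟨r, .refl G r, fun h' => (h h').elim⟩

theorem IsEvasion.exists_strategy [Nonempty V] {G : SimpleGraph V} {S : Set V}
    {R : V → V → Prop} (hR : IsEvasion G S R) :
    ∃ τ : List V → V, ∀ c : ℕ → V, (∀ m, ClosedAdj G (robPos τ c m) (robPos τ c (m + 1))) ∧
      ((∀ m, ClosedAdj G (c m) (c (m + 1))) → ∀ m, (∀ k ≤ m, c k ∈ S) →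
        c m ≠ robPos τ c m ∧ c (m + 1) ≠ robPos τ c m) := by
  choose start hstart using hR.exists_start
  choose next hlegal hnext using exists_legal_response G R
  refine ⟨positionalStrategy start next, fun c => ⟨fun m => ?_, fun hc m hS => ?_⟩⟩
  · rw [robPos_positionalStrategy_succ]
    exact hlegal _ _
  have hsafe : R (c m) (robPos (positionalStrategy start next) c m) := by
    induction m with
    | zero =>
      rw [robPos_positionalStrategy_zero]
      exact hstart _
    | succ m ih =>
      rw [robPos_positionalStrategy_succ]
      exact hnext _ _ (hR.exists_response (hS m m.le_succ)
        (ih fun k hk => hS k (hk.trans m.le_succ)) (hc m))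
  exact ⟨hR.ne_of_move (hS m le_rfl) hsafe (.refl G _), hR.ne_of_move (hS m le_rfl) hsafe (hc m)⟩

end Strategy

section StarPath

variable {V : Type*} {G : SimpleGraph V}

theorem ClosedAdj.starPath_zero {x y : V} (h : ClosedAdj G x y) (n : ℕ) :
    ClosedAdj (starPath G n) (x, 0) (y, 0) := by
  rcases h with rfl | h
  · exact .refl _ _
  · refine .inr ⟨fun heq => h.ne (congrArg Prod.fst heq), .inl (.inl ⟨.inr h, ?_, ?_⟩)⟩ <;> simp

theorem ClosedAdj.fst_of_starPath {n : ℕ} {p q : V × Fin (n + 1)} (hp : p.2.val ≠ n)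
    (h : ClosedAdj (starPath G n) p q) : ClosedAdj G p.1 q.1 := by
  rcases h with rfl | ⟨-, (⟨h, -⟩ | ⟨hpn, -⟩) | (⟨h, -⟩ | ⟨-, hpn⟩)⟩
  · exact .refl G _
  · exact h.imp Eq.symm id
  · exact (hp hpn).elim
  · exact h.imp id SimpleGraph.Adj.symm
  · exact (hp hpn).elim

theorem IsEvasion.starPath {R : V → V → Prop} (hR : IsEvasion G Set.univ R) (n : ℕ) :
    IsEvasion (starPath G n) {p | p.2.val ≠ n} fun c r => ∃ x, (x, 0) = r ∧ R c.1 x :=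
  hR.of_retract (fun _ => rfl) (.starPath_zero · n) .fst_of_starPath (Set.mapsTo_univ _ _)

end StarPath

theorem robber_forces_cop_to_top {V : Type u} [Fintype V] (G : SimpleGraph V) (n : ℕ)
    (hn : 0 < n) (hG : ¬ Constructible G) :
    ∃ τ : List (V × Fin (n + 1)) → V × Fin (n + 1),
      ∀ c : ℕ → V × Fin (n + 1),
        (∀ m : ℕ, c (m + 1) = c m ∨ (starPath G n).Adj (c m) (c (m + 1))) →
        -- the robber's moves are legal
        (∀ m : ℕ, robPos τ c (m + 1) = robPos τ c m ∨
          (starPath G n).Adj (robPos τ c m) (robPos τ c (m + 1))) ∧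
        -- if the cop never occupies a vertex of the form (x, n), the robber is never caught
        ((∀ m : ℕ, (c m).2.val ≠ n) →
          ∀ m : ℕ, c m ≠ robPos τ c m ∧ c (m + 1) ≠ robPos τ c m) ∧
        -- in particular, the cop must visit a vertex of the form (x, n) before catching the robber
        (∀ m : ℕ, (c m = robPos τ c m ∨ c (m + 1) = robPos τ c m) →
          ∃ k ≤ m + 1, (c k).2.val = n) := by
  have : Nontrivial V :=
    not_subsingleton_iff_nontrivial.mp fun _ => hG (constructible_of_subsingleton G)
  obtain ⟨R, hR⟩ := (constructible_or_exists_isEvasion G).resolve_left hG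
  obtain ⟨τ, hτ⟩ := (hR.starPath n).exists_strategy
  refine ⟨τ, fun c hc => ?_⟩
  obtain ⟨hlegal, hsafe⟩ := hτ c
  refine ⟨hlegal, fun hS m => hsafe hc m fun k _ => hS k, fun m hcaught => ?_⟩
  by_contra! hS
  have hfree := hsafe hc m fun k hk => hS k (hk.trans m.le_succ)
  exact hcaught.elim hfree.1 hfree.2
end

section
/- Let α be a countable non-zero limit ordinal. Then there exists a family (S_β)_{β<α} of pairwise disjoint subsets of the set of ordinals less than α such that for every β < α, the order type of S_β (with the ordinal ordering) is exactly β. -/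
/-- The set `S` of ordinals has order type `β` (with its inherited ordering): `S` is
order-isomorphic to the set of ordinals less than `β`. -/
def HasOrderType (S : Set Ordinal) (β : Ordinal) : Prop :=
  Nonempty (S ≃o Set.Iio β)

/-!
Every ordinal is uniquely `ω * q + k` with `k` finite, so the ordinals are an ordered union of
blocks of type `ω`, and a limit ordinal is a union of whole blocks. For each `n`, the map
`ω * q + k ↦ ω * q + Nat.pair n k` is strictly increasing and stays inside each block, and these
maps have disjoint ranges for distinct `n`. A limit ordinal `α` therefore contains infinitely many
disjoint copies of itself, and countably many prescribed order types `β ≤ α` can be realized as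
initial segments of different copies.
-/

open Order Ordinal Set

/-- The natural number `k` in the decomposition `x = ω * q + k`, i.e. the position of `x` in its
block; the finite ordinal `x % ω` is turned into a natural number through its cardinality. -/
noncomputable def finitePart (x : Ordinal) : ℕ :=
  Cardinal.toNat (x % ω).card

theorem natCast_finitePart (x : Ordinal) : (finitePart x : Ordinal) = x % ω := by
  obtain ⟨k, hk⟩ := lt_omega0.1 (mod_lt x omega0_ne_zero)
  simp [finitePart, hk]

theorem omega0_mul_div_add_finitePart (x : Ordinal) : ω * (x / ω) + finitePart x = x := by
  rw [natCast_finitePart, div_add_mod]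

theorem finitePart_omega0_mul_add_natCast (q : Ordinal) (k : ℕ) :
    finitePart (ω * q + k) = k := by
  have h : (finitePart (ω * q + k) : Ordinal) = k := by
    rw [natCast_finitePart, mul_add_mod_self, mod_eq_of_lt (natCast_lt_omega0 k)]
  exact_mod_cast h

/-- The map `ω * q + k ↦ ω * q + e k`, acting as `e` on each block of `ω` consecutive ordinals. -/
noncomputable def mapFinitePart (e : ℕ → ℕ) (x : Ordinal) : Ordinal :=
  ω * (x / ω) + e (finitePart x)

theorem finitePart_mapFinitePart (e : ℕ → ℕ) (x : Ordinal) :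
    finitePart (mapFinitePart e x) = e (finitePart x) :=
  finitePart_omega0_mul_add_natCast _ _

theorem strictMono_mapFinitePart {e : ℕ → ℕ} (he : StrictMono e) :
    StrictMono (mapFinitePart e) := by
  intro x y hxy
  obtain hdiv | hdiv := (div_le_left hxy.le ω).lt_or_eq
  · calc mapFinitePart e x
        < ω * (y / ω) := lt_mul_iff.2 ⟨_, hdiv, _, natCast_lt_omega0 _, rfl⟩
      _ ≤ mapFinitePart e y := le_self_add
  · have hfin : finitePart x < finitePart y := by
      rw [← omega0_mul_div_add_finitePart x, ← omega0_mul_div_add_finitePart y, hdiv] at hxy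
      exact_mod_cast lt_of_add_lt_add_left hxy
    rw [mapFinitePart, mapFinitePart, hdiv]
    gcongr
    exact he hfin

theorem mapFinitePart_lt {α x : Ordinal} (hα : IsSuccPrelimit α) (hx : x < α) (e : ℕ → ℕ) :
    mapFinitePart e x < α :=
  hα.add_natCast_lt ((mul_div_le x ω).trans_lt hx) _

theorem disjoint_range_mapFinitePart {e e' : ℕ → ℕ} (h : Disjoint (range e) (range e')) :
    Disjoint (range (mapFinitePart e)) (range (mapFinitePart e')) := by
  rw [disjoint_range_iff] at h ⊢
  intro x y hxy
  apply h (finitePart x) (finitePart y)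
  rw [← finitePart_mapFinitePart e, hxy, finitePart_mapFinitePart]

theorem strictMono_natPair (n : ℕ) : StrictMono (Nat.pair n) :=
  fun _ _ ↦ Nat.pair_lt_pair_right n

theorem disjoint_range_natPair {m n : ℕ} (hmn : m ≠ n) :
    Disjoint (range (Nat.pair m)) (range (Nat.pair n)) :=
  disjoint_range_iff.2 fun _ _ h ↦ hmn (Nat.pair_eq_pair.1 h).1

theorem hasOrderType_image_Iio {f : Ordinal → Ordinal} {β : Ordinal}
    (hf : StrictMonoOn f (Iio β)) : HasOrderType (f '' Iio β) β :=
  ⟨(hf.orderIso f (Iio β)).symm⟩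

theorem countable_Iio_of_card_le_aleph0 {α : Ordinal} (hα : α.card ≤ Cardinal.aleph0) :
    (Iio α).Countable := by
  rwa [← Cardinal.le_aleph0_iff_set_countable, Cardinal.mk_Iio_ordinal, Cardinal.lift_le_aleph0]

theorem exists_disjoint_subsets_of_all_smaller_orderTypes_general {ι : Type*} {s : Set ι}
    (hs : s.Countable) {α : Ordinal} (hα : IsSuccPrelimit α) {β : ι → Ordinal}
    (hβ : ∀ i ∈ s, β i ≤ α) :
    ∃ S : ι → Set Ordinal,
      (∀ i ∈ s, S i ⊆ Iio α) ∧ s.PairwiseDisjoint S ∧ ∀ i ∈ s, HasOrderType (S i) (β i) := by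
  obtain ⟨code, hcode⟩ := countable_iff_exists_injOn.1 hs
  refine ⟨fun i ↦ mapFinitePart (Nat.pair (code i)) '' Iio (β i), ?_, ?_, ?_⟩
  · rintro i hi _ ⟨x, hx, rfl⟩
    exact mapFinitePart_lt hα (hx.trans_le (hβ i hi)) _
  · intro i hi j hj hij
    exact (disjoint_range_mapFinitePart (disjoint_range_natPair (hcode.ne hi hj hij))).mono
      (image_subset_range _ _) (image_subset_range _ _)
  · intro i _
    exact hasOrderType_image_Iio ((strictMono_mapFinitePart (strictMono_natPair _)).strictMonoOn _)

theorem exists_disjoint_subsets_of_all_smaller_orderTypes (α : Ordinal)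
    (hlim : Order.IsSuccLimit α) (hcount : α.card ≤ Cardinal.aleph0) :
    ∃ S : Ordinal → Set Ordinal,
      (∀ β < α, S β ⊆ Set.Iio α) ∧
      (∀ β γ, β < α → γ < α → β ≠ γ → Disjoint (S β) (S γ)) ∧
      (∀ β < α, HasOrderType (S β) β) := by
  obtain ⟨S, hsub, hdisj, htype⟩ := exists_disjoint_subsets_of_all_smaller_orderTypes_general
    (countable_Iio_of_card_le_aleph0 hcount) hlim.isSuccPrelimit (fun _ hβ ↦ le_of_lt hβ)
  exact ⟨S, hsub, fun _ _ hβ hγ ↦ hdisj hβ hγ, htype⟩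
end

section
/- Every constructible graph is locally constructible: if G is a constructible graph and V is a finite set of vertices of G, then there exists a finite set U of vertices with V ⊆ U such that the induced subgraph G[U] is constructible. (Indeed, one may take U to be the union of the trails, under a fixed domination map, of all vertices of V.) -/
universe u

/-- `G` is locally constructible: every finite set of vertices is contained in a finite set
inducing a constructible subgraph. -/
def LocallyConstructible {V : Type u} (G : SimpleGraph V) : Prop :=
  ∀ A : Set V, A.Finite → ∃ U : Set V, A ⊆ U ∧ U.Finite ∧ Constructible (G.induce U)

/-!
Fix a construction order and a domination map `δ`. Each trail descends in a well-order until it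
reaches the root, so it is finite. A set `U` closed under `δ` contains the parent of each of its
vertices, and domination passes to induced subgraphs, so restricting the construction order to `U`
constructs `G[U]`. The union of the trails of finitely many vertices is finite and closed under `δ`.
-/

/-- `δ` is a domination map for the construction order `r` of `G`, sending each non-root vertex to
its parent. To make `δ` total, the root is sent to itself. -/
structure IsDominationMap {V : Type u} (G : SimpleGraph V) (r : V → V → Prop) (δ : V → V) :
    Prop where
  rel : ∀ x, (∃ y, r y x) → r (δ x) x
  dominatesOn : ∀ x, (∃ y, r y x) → DominatesOn G {z | r z x ∨ z = x} (δ x) x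
  root : ∀ x, (¬∃ y, r y x) → δ x = x

/-- The set of vertices on the trail `x, δ x, δ (δ x), …` of `x`. A domination map fixes the root,
so iterating past the root adds no vertices. -/
def trail {V : Type u} (δ : V → V) (x : V) : Set V :=
  Set.range fun n : ℕ => δ^[n] x

section Trail

variable {V : Type u} {δ : V → V}

theorem mem_trail_self (x : V) : x ∈ trail δ x :=
  ⟨0, rfl⟩

theorem mapsTo_trail (x : V) : Set.MapsTo δ (trail δ x) (trail δ x) := by
  rintro _ ⟨n, rfl⟩
  exact ⟨n + 1, Function.iterate_succ_apply' δ n x⟩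

theorem trail_subset_insert (x : V) : trail δ x ⊆ insert x (trail δ (δ x)) := by
  rintro _ ⟨_ | n, rfl⟩
  · exact Set.mem_insert x _
  · exact Set.mem_insert_of_mem x ⟨n, rfl⟩

theorem trail_eq_singleton {x : V} (hx : δ x = x) : trail δ x = {x} := by
  simp only [trail, Function.iterate_fixed hx, Set.range_const]

theorem finite_trail {r : V → V → Prop} (hr : WellFounded r) (hδ : ∀ x, δ x ≠ x → r (δ x) x)
    (x : V) : (trail δ x).Finite := by
  induction x using hr.induction with
  | _ x ih =>
    by_cases hx : δ x = x
    · exact trail_eq_singleton hx ▸ Set.finite_singleton x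
    · exact ((ih (δ x) (hδ x hx)).insert x).subset (trail_subset_insert x)

end Trail

section ConstructionOrder

variable {V : Type u} {G : SimpleGraph V} {r : V → V → Prop} {δ : V → V} {U : Set V}

theorem DominatesOn.induce {S : Set V} {y x : U} (h : DominatesOn G S y x) :
    DominatesOn (G.induce U) (Subtype.val ⁻¹' S) y x :=
  ⟨Subtype.coe_ne_coe.1 h.1, fun z hz hzx =>
    (h.2 z hz (hzx.imp_left (congrArg Subtype.val))).imp_left Subtype.ext⟩

theorem ConstructionOrderSpec.exists_isDominationMap (h : ConstructionOrderSpec G r) :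
    ∃ δ, IsDominationMap G r δ := by
  have exists_parent : ∀ x, ∃ y, ((∃ z, r z x) → r y x ∧ DominatesOn G {z | r z x ∨ z = x} y x) ∧
      ((¬∃ z, r z x) → y = x) := by
    intro x
    by_cases hx : ∃ z, r z x
    · obtain ⟨y, hy⟩ := h x hx
      exact ⟨y, fun _ => hy, (absurd hx ·)⟩
    · exact ⟨x, (absurd · hx), fun _ => rfl⟩
  choose δ parent root using exists_parent
  exact ⟨δ, fun x hx => (parent x hx).1, fun x hx => (parent x hx).2, root⟩

theorem IsDominationMap.rel_of_ne (hδ : IsDominationMap G r δ) {x : V} (hx : δ x ≠ x) :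
    r (δ x) x :=
  hδ.rel x (not_imp_comm.1 (hδ.root x) hx)

theorem IsDominationMap.constructionOrderSpec_induce (hδ : IsDominationMap G r δ)
    (hU : Set.MapsTo δ U U) : ConstructionOrderSpec (G.induce U) (Subrel r (· ∈ U)) := by
  rintro x ⟨y, hyx⟩
  have hx : ∃ z, r z x := ⟨y, hyx⟩
  refine ⟨⟨δ x, hU x.2⟩, hδ.rel x hx, ?_⟩
  simpa only [Set.preimage_ofPred_eq, subrel_val, ← Subtype.ext_iff] using
    (hδ.dominatesOn x hx).induce (y := ⟨δ x, hU x.2⟩)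

end ConstructionOrder

theorem locallyConstructible_of_constructible {V : Type u} (G : SimpleGraph V)
    (h : Constructible G) : LocallyConstructible G := by
  obtain ⟨r, hr, hspec⟩ := h
  obtain ⟨δ, hδ⟩ := hspec.exists_isDominationMap
  intro A hA
  let U : Set V := ⋃ a ∈ A, trail δ a
  have subset_U : A ⊆ U := fun a ha => Set.mem_biUnion ha (mem_trail_self a)
  have finite_U : U.Finite :=
    hA.biUnion fun a _ => finite_trail hr.wf (fun _ => hδ.rel_of_ne) a
  have mapsTo_U : Set.MapsTo δ U U := Set.mapsTo_iUnion₂_iUnion₂ fun a _ => mapsTo_trail a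
  exact ⟨U, subset_U, finite_U, Subrel r (· ∈ U), inferInstance,
    hδ.constructionOrderSpec_induce mapsTo_U⟩
end

section
/- Let (G_n)_{n≥0} be a nested sequence of finite graphs (each G_n is an induced subgraph of G_{n+1}), and suppose that G_k is constructible for some k. Then the induced subgraph of the union graph ⊔G_n on the vertex set {(m, x) : m ≤ k, x ∈ V(G_m)} is constructible. -/
universe u

/-- The union graph `⊔ G_n` of a nested sequence of graphs `G_n = H[S n]` (encoded by an
ambient graph `H` and a nested sequence of vertex sets `S`): vertex set the disjoint union
`{(n, x) : x ∈ S n}`, with distinct `(n, x)` and `(n', x')` adjacent iff `|n - n'| ≤ 1` and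
`x` and `x'` are adjacent or equal. -/
def unionGraph {V : Type u} (H : SimpleGraph V) (S : ℕ → Set V) :
    SimpleGraph {p : ℕ × V // p.2 ∈ S p.1} :=
  SimpleGraph.fromRel (fun p q =>
    (p.val.1 ≤ q.val.1 + 1 ∧ q.val.1 ≤ p.val.1 + 1) ∧
    (p.val.2 = q.val.2 ∨ H.Adj p.val.2 q.val.2))

/-!
Order the vertices of levels `≤ k` by decreasing level. Level `k` is a copy of `G_k` and comes
first, in a construction order of `G_k`. When a vertex `(m, x)` with `m < k` is added, only levels
`≥ m` are present, so its neighbours lie in levels `m` and `m + 1`, and each of them is adjacent or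
equal to the earlier vertex `(m + 1, x)`.
-/

section Constructible

variable {U W : Type*} {K : SimpleGraph U} {G : SimpleGraph W}

theorem DominatesOn.mono_s18 {A B : Set W} {x y : W} (h : DominatesOn G B y x) (hAB : A ⊆ B) :
    DominatesOn G A y x :=
  ⟨h.1, fun z hz => h.2 z (hAB hz)⟩

theorem dominatesOn_image_iff (φ : K ↪g G) {A : Set U} {x y : U} :
    DominatesOn G (φ '' A) (φ y) (φ x) ↔ DominatesOn K A y x := by
  simp only [DominatesOn, Set.forall_mem_image, ne_eq, φ.injective.eq_iff, φ.map_adj_iff]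

theorem dominatesOn_induce_iff {A : Set W} {B : Set A} {x y : A} :
    DominatesOn (G.induce A) B y x ↔ DominatesOn G (Subtype.val '' B) y x :=
  (dominatesOn_image_iff (SimpleGraph.Embedding.induce A)).symm

theorem exists_isWellOrder_extending {β γ : Type*} (i : β ↪ γ) (r : β → β → Prop)
    [IsWellOrder β r] :
    ∃ s : γ → γ → Prop, IsWellOrder γ s ∧ ∀ a b, s (i a) (i b) ↔ r a b := by
  classical
  let e : β ⊕ ↥(Set.range i)ᶜ ≃ γ :=
    ((Equiv.ofInjective i i.injective).sumCongr (Equiv.refl _)).trans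
      (Equiv.Set.sumCompl (Set.range i))
  have he (a : β) : e.symm (i a) = Sum.inl a := e.symm_apply_apply (Sum.inl a)
  exact ⟨e.symm ⁻¹'o Sum.Lex r WellOrderingRel, inferInstance, fun a b => by
    simp only [Order.Preimage, he, Sum.lex_inl_inl]⟩

theorem exists_isWellOrder_lex {α β : Type*} [LinearOrder α] [WellFoundedLT α] (f : β → α)
    (s : β → β → Prop) [IsWellOrder β s] :
    ∃ t : β → β → Prop, IsWellOrder β t ∧ ∀ x y, t x y ↔ f x < f y ∨ f x = f y ∧ s x y := by
  let graph : β ↪ α × β := ⟨fun x => (f x, x), fun _ _ h => congrArg Prod.snd h⟩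
  exact ⟨graph ⁻¹'o Prod.Lex (· < ·) s, (RelEmbedding.preimage graph _).isWellOrder,
    fun _ _ => Prod.lex_def⟩

theorem Constructible.of_embedding_of_rank {α : Type*} [LinearOrder α] [OrderBot α]
    [WellFoundedLT α] (hK : Constructible K) (φ : K ↪g G) (rank : W → α)
    (hφ : ∀ x, x ∈ Set.range φ ↔ rank x = ⊥)
    (hdom : ∀ x, rank x ≠ ⊥ → ∃ y, rank y < rank x ∧ DominatesOn G {z | rank z ≤ rank x} y x) :
    Constructible G := by
  obtain ⟨r, hr, hspec⟩ := hK
  obtain ⟨s, hs, hsr⟩ := exists_isWellOrder_extending φ.toEmbedding r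
  obtain ⟨lex, hlex, lex_iff⟩ := exists_isWellOrder_lex rank s
  have rank_le {y x : W} (h : lex y x) : rank y ≤ rank x :=
    ((lex_iff y x).1 h).elim le_of_lt fun h => h.1.le
  have rank_φ (a : U) : rank (φ a) = ⊥ := (hφ _).1 ⟨a, rfl⟩
  have lex_φ {a b : U} : lex (φ a) (φ b) ↔ r a b := by
    simp only [lex_iff, rank_φ, lt_irrefl, false_or, true_and]
    exact hsr a b
  have mem_range {z : W} {a : U} (h : lex z (φ a)) : z ∈ Set.range φ :=
    (hφ z).2 (le_bot_iff.1 (rank_φ a ▸ rank_le h))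
  refine ⟨lex, hlex, fun x hx => ?_⟩
  by_cases hbot : rank x = ⊥
  · obtain ⟨a, rfl⟩ := (hφ x).2 hbot
    obtain ⟨y, hy⟩ := hx
    obtain ⟨b, rfl⟩ := mem_range hy
    obtain ⟨c, hca, hc⟩ := hspec a ⟨b, lex_φ.1 hy⟩
    refine ⟨φ c, lex_φ.2 hca, ((dominatesOn_image_iff φ).2 hc).mono_s18 ?_⟩
    rintro z (hz | rfl)
    · obtain ⟨d, rfl⟩ := mem_range hz
      exact ⟨d, .inl (lex_φ.1 hz), rfl⟩
    · exact ⟨a, .inr rfl, rfl⟩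
  · obtain ⟨y, hyx, hy⟩ := hdom x hbot
    refine ⟨y, (lex_iff y x).2 (.inl hyx), hy.mono_s18 ?_⟩
    rintro z (hz | rfl)
    exacts [rank_le hz, le_rfl]

end Constructible

section UnionGraph

variable {V : Type u} {H : SimpleGraph V} {S : ℕ → Set V}

theorem eq_or_unionGraph_adj_iff {p q : {p : ℕ × V // p.2 ∈ S p.1}} :
    q = p ∨ (unionGraph H S).Adj p q ↔
      (p.val.1 ≤ q.val.1 + 1 ∧ q.val.1 ≤ p.val.1 + 1) ∧
        (q.val.2 = p.val.2 ∨ H.Adj p.val.2 q.val.2) := by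
  rw [unionGraph, SimpleGraph.fromRel_adj]
  grind [SimpleGraph.adj_comm]

theorem dominatesOn_unionGraph_succ {n : ℕ} {x : V} (hx : x ∈ S n) (hx' : x ∈ S (n + 1)) :
    DominatesOn (unionGraph H S) {p | n ≤ p.val.1} ⟨(n + 1, x), hx'⟩ ⟨(n, x), hx⟩ := by
  refine ⟨by simp, fun q (hq : n ≤ q.val.1) hadj => ?_⟩
  rw [eq_or_unionGraph_adj_iff] at hadj ⊢
  exact ⟨by dsimp only at hadj ⊢; omega, hadj.2⟩

theorem unionGraph_adj_same_level_iff {n : ℕ} {x y : V} (hx : x ∈ S n) (hy : y ∈ S n) :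
    (unionGraph H S).Adj ⟨(n, x), hx⟩ ⟨(n, y), hy⟩ ↔ H.Adj x y := by
  rw [unionGraph, SimpleGraph.fromRel_adj]
  grind [SimpleGraph.adj_comm, SimpleGraph.irrefl]

/-- The copy of `H[S n]` on level `n` of the union graph, embedded into the subgraph induced by the
levels `≤ k`. -/
def levelEmbedding (H : SimpleGraph V) (S : ℕ → Set V) {n k : ℕ} (hnk : n ≤ k) :
    H.induce (S n) ↪g (unionGraph H S).induce {p | p.val.1 ≤ k} where
  toFun x := ⟨⟨(n, x), x.property⟩, hnk⟩
  inj' _ _ h := Subtype.ext (congrArg (fun p => p.val.val.2) h)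
  map_rel_iff' {x y} := unionGraph_adj_same_level_iff x.property y.property

theorem mem_range_levelEmbedding_iff {n k : ℕ} (hnk : n ≤ k)
    {p : {p : {p : ℕ × V // p.2 ∈ S p.1} | p.val.1 ≤ k}} :
    p ∈ Set.range (levelEmbedding H S hnk) ↔ p.val.val.1 = n := by
  constructor
  · rintro ⟨x, rfl⟩
    rfl
  · rintro rfl
    exact ⟨⟨p.val.val.2, p.val.property⟩, rfl⟩

end UnionGraph

theorem unionGraph_initial_segment_constructible_general {V : Type u} (H : SimpleGraph V)
    (S : ℕ → Set V) (hmono : Monotone S) (k : ℕ) (hk : Constructible (H.induce (S k))) :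
    Constructible ((unionGraph H S).induce {p | p.val.1 ≤ k}) := by
  refine hk.of_embedding_of_rank (levelEmbedding H S le_rfl) (fun p => k - p.val.val.1) ?_ ?_
  · intro p
    have hp : p.val.val.1 ≤ k := p.property
    rw [mem_range_levelEmbedding_iff, Nat.bot_eq_zero]
    omega
  · rintro ⟨⟨⟨n, x⟩, hx⟩, _⟩ (hrank : k - n ≠ 0)
    have hnk : n < k := by omega
    have hx' : x ∈ S (n + 1) := hmono n.le_succ hx
    refine ⟨⟨⟨(n + 1, x), hx'⟩, hnk⟩, by dsimp only; omega,
      dominatesOn_induce_iff.2 ((dominatesOn_unionGraph_succ hx hx').mono_s18 ?_)⟩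
    rintro _ ⟨⟨q, _⟩, hrank_q : k - q.val.1 ≤ k - n, rfl⟩
    change n ≤ q.val.1
    omega

theorem unionGraph_initial_segment_constructible {V : Type u} (H : SimpleGraph V)
    (S : ℕ → Set V) (hfin : ∀ m, (S m).Finite) (hmono : Monotone S) (k : ℕ)
    (hk : Constructible (H.induce (S k))) :
    Constructible ((unionGraph H S).induce {p | p.val.1 ≤ k}) :=
  unionGraph_initial_segment_constructible_general H S hmono k hk
end

section
/- Let α be a countable non-zero limit ordinal. Then there exists a countably infinite family of pairwise disjoint subsets of the set of ordinals less than α, each of which has order type exactly α. -/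
/-!
Every ordinal below `ω * b` is `ω * q + n` for a unique `q < b` and a unique natural number `n`.
Restricting the remainder `n` to an infinite set of natural numbers keeps a copy of `ω` in each
of the `b` blocks, so the order type remains `ω * b`; disjoint sets of remainders give disjoint
sets of ordinals. Infinitely many disjoint infinite sets of remainders come from `Nat.pair`.
-/

open Set
open scoped Ordinal

theorem strictMono_mul_add_lex {c : Ordinal} {S : Set Ordinal} (hS : S ⊆ Iio c)
    (T : Set Ordinal) :
    StrictMono fun p : T ×ₗ S ↦ c * ((ofLex p).1 : Ordinal) + ((ofLex p).2 : Ordinal) := by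
  intro p p' hlt
  rcases Prod.Lex.lt_iff.1 hlt with hq | ⟨hq, hr⟩
  · calc c * ((ofLex p).1 : Ordinal) + (ofLex p).2
        < c * (ofLex p).1 + c := by gcongr; exact hS (ofLex p).2.2
      _ = c * Order.succ ((ofLex p).1 : Ordinal) := (Ordinal.mul_succ _ _).symm
      _ ≤ c * (ofLex p').1 := by gcongr; exact Order.succ_le_of_lt hq
      _ ≤ c * (ofLex p').1 + (ofLex p').2 := le_self_add
  · simp only [hq]
    gcongr

theorem range_mul_add_lex {c : Ordinal} {S : Set Ordinal} (hS : S ⊆ Iio c) (b : Ordinal) :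
    range (fun p : Iio b ×ₗ S ↦ c * ((ofLex p).1 : Ordinal) + ((ofLex p).2 : Ordinal)) =
      {x ∈ Iio (c * b) | x % c ∈ S} := by
  ext x
  constructor
  · rintro ⟨p, rfl⟩
    have hr : ((ofLex p).2 : Ordinal) < c := hS (ofLex p).2.2
    have hc : c ≠ 0 := hr.ne_bot
    constructor
    · rw [mem_Iio, Ordinal.lt_mul_iff_div_lt hc, Ordinal.mul_add_div _ hc,
        Ordinal.div_eq_zero_of_lt hr, add_zero]
      exact (ofLex p).1.2
    · rw [Ordinal.mul_add_mod_self, Ordinal.mod_eq_of_lt hr]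
      exact (ofLex p).2.2
  · rintro ⟨hx, hr⟩
    have hc : c ≠ 0 := by
      rintro rfl
      simp at hx
    have hq : x / c < b := (Ordinal.lt_mul_iff_div_lt hc).1 hx
    exact ⟨toLex (⟨x / c, hq⟩, ⟨x % c, hr⟩), Ordinal.div_add_mod x c⟩

theorem nonempty_lex_orderIso_setOf_mod_mem {c : Ordinal} {S : Set Ordinal} (hS : S ⊆ Iio c)
    (b : Ordinal) : Nonempty (Iio b ×ₗ S ≃o {x ∈ Iio (c * b) | x % c ∈ S}) := by
  rw [← range_mul_add_lex hS b]
  exact ⟨(strictMono_mul_add_lex hS (Iio b)).orderIso⟩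

theorem HasOrderType.setOf_mod_mem {S : Set Ordinal} {c d : Ordinal} (h : HasOrderType S d)
    (hS : S ⊆ Iio c) (b : Ordinal) :
    HasOrderType {x ∈ Iio (c * b) | x % c ∈ S} (d * b) := by
  have mod_mem : {x ∈ Iio (d * b) | x % d ∈ Iio d} = Iio (d * b) := by
    refine sep_eq_self_iff_mem_true.2 fun x hx ↦ Ordinal.mod_lt x ?_
    rintro rfl
    simp at hx
  obtain ⟨e⟩ := h
  obtain ⟨eS⟩ := nonempty_lex_orderIso_setOf_mod_mem hS b
  obtain ⟨ed⟩ := nonempty_lex_orderIso_setOf_mod_mem (subset_refl (Iio d)) b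
  rw [mod_mem] at ed
  exact ⟨eS.symm.trans ((Prod.Lex.prodLexCongr (OrderIso.refl _) e).trans ed)⟩

theorem range_natCast_eq_Iio_omega0 : range ((↑) : ℕ → Ordinal) = Iio ω := by
  ext x
  simp only [mem_range, mem_Iio, Ordinal.lt_omega0, eq_comm]

theorem hasOrderType_range_omega0 {f : ℕ → Ordinal} (hf : StrictMono f) :
    HasOrderType (range f) ω := by
  rw [HasOrderType, ← range_natCast_eq_Iio_omega0]
  exact ⟨hf.orderIso.symm.trans Nat.strictMono_cast.orderIso⟩

theorem exists_countably_many_disjoint_subsets_of_full_orderType_general (α : Ordinal)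
    (hlim : Order.IsSuccPrelimit α) :
    ∃ Q : ℕ → Set Ordinal,
      (∀ i, Q i ⊆ Set.Iio α) ∧
      (∀ i j : ℕ, i ≠ j → Disjoint (Q i) (Q j)) ∧
      (∀ i, HasOrderType (Q i) α) := by
  obtain ⟨b, rfl⟩ := Ordinal.isSuccPrelimit_iff_omega0_dvd.1 hlim
  let R (i : ℕ) : Set Ordinal := range fun n ↦ (Nat.pair i n : Ordinal)
  have R_subset (i : ℕ) : R i ⊆ Iio ω := range_subset_iff.2 fun n ↦ Ordinal.natCast_lt_omega0 _
  have R_disjoint {i j : ℕ} (hij : i ≠ j) : Disjoint (R i) (R j) := by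
    refine disjoint_range_iff.2 fun m n h ↦ hij ?_
    exact (Nat.pair_eq_pair.1 (Nat.cast_injective h)).1
  have R_orderType (i : ℕ) : HasOrderType (R i) ω :=
    hasOrderType_range_omega0 (Nat.strictMono_cast.comp fun _ _ ↦ Nat.pair_lt_pair_right i)
  refine ⟨fun i ↦ {x ∈ Iio (ω * b) | x % ω ∈ R i}, fun i ↦ sep_subset _ _, fun i j hij ↦ ?_,
    fun i ↦ (R_orderType i).setOf_mod_mem (R_subset i) b⟩
  exact ((R_disjoint hij).preimage (· % ω)).mono (fun _ h ↦ h.2) fun _ h ↦ h.2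

theorem exists_countably_many_disjoint_subsets_of_full_orderType (α : Ordinal)
    (hlim : Order.IsSuccLimit α) (hcount : α.card ≤ Cardinal.aleph0) :
    ∃ Q : ℕ → Set Ordinal,
      (∀ i, Q i ⊆ Set.Iio α) ∧
      (∀ i j : ℕ, i ≠ j → Disjoint (Q i) (Q j)) ∧
      (∀ i, HasOrderType (Q i) α) :=
  exists_countably_many_disjoint_subsets_of_full_orderType_general α hlim.isSuccPrelimit
end
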